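/- Fix a real number x > 1/2 and set s = √(2x−1), u(t) = t·s − arctan(s), p = ((√(2x)+1)/(√(2x)−1))^{√2/4}, and for real y with sin y < 0 and 1 + cos y > 0 define F₁(y) = (−1/(√2·sin y))·(−sin y/(1+cos y))^{−1/√2} and F₂(y) = (−1/(√2·sin y))·(−sin y/(1+cos y))^{1/√2}. Then there exists ε > 0 such that for every real t with |t| < ε, the series Σ_{n≥0} R⁺_n(x)·tⁿ/n! converges and equals (s/(2·√x·p))·(p²·F₂(u(t)) + F₁(u(t))). -/

import Mathlib

/-!
Removing the entry `±(n+1)` from a signed simsun permutation of rank `n + 1` leaves one of rank `n`,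
and conversely `π` of rank `n` extends by exactly those insertions of `±(n+1)` that create no
double descent. Counting these insertions by their effect on the descent number `k` of `π`
(`insSum_pos`, `insSum_neg`) and on the sign of the first entry (`insSum_wtP`, `insSum_wtM`) gives,
with `P_n = R⁺_n` and `M_n = R⁻_n`,

* `P_{n+1} = (1 + 2nx) P_n + (2x - 4x²) P_n' + M_n`,
* `M_{n+1} = (2x + 2nx) M_n + (2x - 4x²) M_n' + x P_n`

(`RpReal_succ`, `RmReal_succ`).

On the analytic side, `F₁` and `F₂` satisfy `F' = F · (r - cos y)/sin y` with `r = ∓1/√2`. Put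
`S = F₁ + p² F₂` and `D = F₁ - p² F₂`, where `p` is held constant. Along the curve
`X = 1/(2 cos² y)` the recurrences above are exactly what makes the `n`-th derivative of `S`
in `y` equal to `(-cot y)^n (P_n(X) S + M_n(X) √2 cos y · D)` (`hasDerivAt_Hn`). At
`y = u(0) = -arctan s` one has `X = x`, `-cot y = 1/s`, `D = 0`, and the prefactor normalises `S`
to `1`, so the `n`-th `t`-derivative at `0` of the claimed generating function is `R⁺_n(x)`. The
function is analytic at `0`, hence equal to its Taylor series nearby.
-/

open Finset

/-- A signed permutation of rank `n`, encoded as an (unsigned) permutation of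
`Fin n` together with a choice of sign for each position: the entry
`π(i+1)` of the word is `±(σ(i)+1)` where the sign is `-` iff `sgn i = true`. -/
abbrev SignedPerm (n : ℕ) := Equiv.Perm (Fin n) × (Fin n → Bool)

/-- The entry `π(j+1)` of the word of a signed permutation. -/
def entry {n : ℕ} (π : SignedPerm n) (j : Fin n) : ℤ :=
  (if π.2 j then -1 else 1) * (((π.1 j : ℕ) : ℤ) + 1)

/-- The word `π(0)π(1)⋯π(n)` of a signed permutation (with the leading `0`). -/
def word {n : ℕ} (π : SignedPerm n) : List ℤ :=
  0 :: List.ofFn (entry π)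

/-- `π(i)` for `0 ≤ i ≤ n` (and `0` outside this range). -/
def wordFn {n : ℕ} (π : SignedPerm n) (i : ℕ) : ℤ :=
  if h : 1 ≤ i ∧ i ≤ n then entry π ⟨i - 1, by omega⟩ else 0

/-- A word has no double descent: no three consecutive strictly decreasing entries. -/
def noDD : List ℤ → Bool
  | a :: b :: c :: rest => (!(decide (b < a) && decide (c < b))) && noDD (b :: c :: rest)
  | _ => true

/-- A signed permutation is simsun if for every `0 ≤ k ≤ n`, deleting the entries
`±n, …, ±(n-k+1)` (i.e. keeping the entries of absolute value `≤ m := n - k`) from the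
word `π(0)π(1)⋯π(n)` leaves a word with no three consecutive strictly decreasing
entries. -/
def IsSimsun {n : ℕ} (π : SignedPerm n) : Prop :=
  ∀ m ≤ n, noDD ((word π).filter (fun a => a.natAbs ≤ m)) = true

instance {n : ℕ} : DecidablePred (IsSimsun (n := n)) := fun _ => by
  unfold IsSimsun; infer_instance

/-- The type-B descent number `des_B(π) = #{0 ≤ i ≤ n-1 : π(i) > π(i+1)}`. -/
def desB {n : ℕ} (π : SignedPerm n) : ℕ :=
  ((Finset.range n).filter (fun i => wordFn π (i + 1) < wordFn π i)).card

/-- The set of signed simsun permutations of rank `n`. -/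
def RB (n : ℕ) : Finset (SignedPerm n) := univ.filter IsSimsun

/-- Signed simsun permutations with `π(1) > 0` (for `n = 0`, the empty permutation
is included, following the convention `R⁺_0 = 1`). -/
def RBp (n : ℕ) : Finset (SignedPerm n) :=
  (RB n).filter (fun π => 0 < wordFn π 1 ∨ n = 0)

/-- Signed simsun permutations with `π(1) < 0`. -/
def RBm (n : ℕ) : Finset (SignedPerm n) :=
  (RB n).filter (fun π => wordFn π 1 < 0)

/-- A signed permutation is even-signed if its word has an even number of negative entries. -/
def IsEvenSigned {n : ℕ} (π : SignedPerm n) : Prop :=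
  (univ.filter (fun j => π.2 j = true)).card % 2 = 0

instance {n : ℕ} : DecidablePred (IsEvenSigned (n := n)) := fun _ => by
  unfold IsEvenSigned; infer_instance

def RD (n : ℕ) : Finset (SignedPerm n) := (RB n).filter IsEvenSigned
def RT (n : ℕ) : Finset (SignedPerm n) := (RB n).filter (fun π => ¬ IsEvenSigned π)
def RDp (n : ℕ) : Finset (SignedPerm n) := (RD n).filter (fun π => 0 < wordFn π 1 ∨ n = 0)
def RDm (n : ℕ) : Finset (SignedPerm n) := (RD n).filter (fun π => wordFn π 1 < 0)
def RTp (n : ℕ) : Finset (SignedPerm n) := (RT n).filter (fun π => 0 < wordFn π 1 ∨ n = 0)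
def RTm (n : ℕ) : Finset (SignedPerm n) := (RT n).filter (fun π => wordFn π 1 < 0)

/-- `R(n,k)`, as an integer, vanishing for `k < 0`. -/
def Rcnt (n : ℕ) (k : ℤ) : ℤ := ((RB n).filter (fun π => (desB π : ℤ) = k)).card
def Rpcnt (n : ℕ) (k : ℤ) : ℤ := ((RBp n).filter (fun π => (desB π : ℤ) = k)).card
def Rmcnt (n : ℕ) (k : ℤ) : ℤ := ((RBm n).filter (fun π => (desB π : ℤ) = k)).card
def Dcnt (n : ℕ) (k : ℤ) : ℤ := ((RD n).filter (fun π => (desB π : ℤ) = k)).card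
def Tcnt (n : ℕ) (k : ℤ) : ℤ := ((RT n).filter (fun π => (desB π : ℤ) = k)).card
def Dpcnt (n : ℕ) (k : ℤ) : ℤ := ((RDp n).filter (fun π => (desB π : ℤ) = k)).card
def Dmcnt (n : ℕ) (k : ℤ) : ℤ := ((RDm n).filter (fun π => (desB π : ℤ) = k)).card
def Tpcnt (n : ℕ) (k : ℤ) : ℤ := ((RTp n).filter (fun π => (desB π : ℤ) = k)).card
def Tmcnt (n : ℕ) (k : ℤ) : ℤ := ((RTm n).filter (fun π => (desB π : ℤ) = k)).card

/-- `R⁺_n(x)` as a real number, for real `x`. -/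
def RpReal (n : ℕ) (x : ℝ) : ℝ := ∑ π ∈ RBp n, x ^ desB π
/-- `R⁻_n(x)` as a real number, for real `x`. -/
def RmReal (n : ℕ) (x : ℝ) : ℝ := ∑ π ∈ RBm n, x ^ desB π

/-- `p(x) = ((√(2x)+1)/(√(2x)-1))^{√2/4}`. -/
noncomputable def pfun (x : ℝ) : ℝ :=
  ((Real.sqrt (2*x) + 1) / (Real.sqrt (2*x) - 1)) ^ (Real.sqrt 2 / 4)

/-- `u(x,t) = t√(2x-1) - arctan(√(2x-1))`. -/
noncomputable def ufun (x t : ℝ) : ℝ :=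
  t * Real.sqrt (2*x - 1) - Real.arctan (Real.sqrt (2*x - 1))

/-- `F₁(y) = (-1/(√2 sin y)) (−sin y/(1+cos y))^{-1/√2}` (real power function). -/
noncomputable def Ffun₁ (y : ℝ) : ℝ :=
  (-1 / (Real.sqrt 2 * Real.sin y)) *
    ((-Real.sin y / (1 + Real.cos y)) ^ (-(1 / Real.sqrt 2)))

/-- `F₂(y) = (-1/(√2 sin y)) (−sin y/(1+cos y))^{1/√2}` (real power function). -/
noncomputable def Ffun₂ (y : ℝ) : ℝ :=
  (-1 / (Real.sqrt 2 * Real.sin y)) *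
    ((-Real.sin y / (1 + Real.cos y)) ^ (1 / Real.sqrt 2))

/-! ### Inserting an extreme entry into a word -/

/-- Number of descents of a list of integers. -/
def desL : List ℤ → ℕ
  | a :: b :: l => (if b < a then 1 else 0) + desL (b :: l)
  | _ => 0

/-- Whether the second entry of a word is smaller than the first one. -/
def startsDown : List ℤ → Prop
  | a :: b :: _ => b < a
  | _ => False

instance : DecidablePred startsDown
  | a :: b :: _ => inferInstanceAs (Decidable (b < a))
  | [_] => inferInstanceAs (Decidable False)
  | [] => inferInstanceAs (Decidable False)

/-- The sum of `Φ` over all lists obtained by inserting `N` into `l` somewhere. -/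
def insSum (N : ℤ) (Φ : List ℤ → ℝ) (l : List ℤ) : ℝ :=
  ∑ i ∈ range (l.length + 1), Φ (l.insertIdx i N)

lemma insSum_nil (N : ℤ) (Φ : List ℤ → ℝ) : insSum N Φ [] = Φ [N] := by
  simp [insSum]

lemma insSum_cons (N : ℤ) (Φ : List ℤ → ℝ) (b : ℤ) (l : List ℤ) :
    insSum N Φ (b :: l) = Φ (N :: b :: l) + insSum N (fun z => Φ (b :: z)) l := by
  unfold insSum
  rw [List.length_cons, sum_range_succ']
  simp [add_comm]

/-- The statistic `f (des z)` of a word `z`, restricted to words without double descents. -/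
def wt (f : ℕ → ℝ) (z : List ℤ) : ℝ := if noDD z = true then f (desL z) else 0

lemma insertIdx_ne_nil (l : List ℤ) (i : ℕ) (N : ℤ) (hi : i ≤ l.length) :
    ∃ c m, l.insertIdx i N = c :: m := by
  rcases i with _ | i
  · exact ⟨_, _, rfl⟩
  · rcases l with _ | ⟨c, m⟩
    · simp at hi
    · exact ⟨c, _, rfl⟩

lemma insSum_congr {N : ℤ} {Φ Ψ : List ℤ → ℝ} {l : List ℤ}
    (h : ∀ i ≤ l.length, Φ (l.insertIdx i N) = Ψ (l.insertIdx i N)) :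
    insSum N Φ l = insSum N Ψ l :=
  sum_congr rfl fun i hi => h i (by simpa [Nat.lt_succ_iff] using hi)

/-- Inserting a new maximum behind the head: `k + 1` of the insertions (into a descent, or at
the end) preserve the number `k` of descents, and an ascent may be broken up exactly when it is
not followed by a descent. -/
lemma insSum_pos (N : ℤ) (l : List ℤ) : ∀ (a : ℤ) (f : ℕ → ℝ), noDD (a :: l) = true →
    (∀ c ∈ a :: l, c < N) →
    insSum N (fun z => wt f (a :: z)) l =
      ((desL (a :: l) : ℝ) + 1) * f (desL (a :: l)) +
      ((l.length : ℝ) - 2 * desL (a :: l) + if startsDown (a :: l) then 1 else 0) *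
        f (desL (a :: l) + 1) := by
  induction l with
  | nil =>
    intro a f _ hN
    have := hN a (by simp)
    simp [insSum_nil, wt, noDD, desL, startsDown, not_lt.2 this.le]
  | cons b l ih =>
    intro a f hD hN
    have ha := hN a (by simp)
    have hb := hN b (by simp)
    have hD' : noDD (b :: l) = true := by
      rcases l with _ | ⟨c, l⟩
      · simp [noDD]
      · simp only [noDD, Bool.and_eq_true] at hD; exact hD.2
    have hdeep : insSum N (fun z => wt f (a :: b :: z)) l =
        insSum N (fun z => wt (fun k => f ((if b < a then 1 else 0) + k)) (b :: z)) l := by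
      apply insSum_congr
      intro i hi
      have key : noDD (a :: b :: l.insertIdx i N) = noDD (b :: l.insertIdx i N) := by
        rcases i with _ | i
        · simp [noDD, not_lt.2 hb.le]
        · rcases l with _ | ⟨c, l⟩
          · simp at hi
          · simp only [List.insertIdx_succ_cons]
            simp only [noDD, Bool.and_eq_true] at hD
            rw [noDD, hD.1, Bool.true_and]
      simp only [wt, key, desL]
    rw [insSum_cons, hdeep, ih b _ hD' (fun c hc => hN c (by simp_all))]
    rcases l with _ | ⟨c, l⟩
    · by_cases hba : b < a
      · simp [wt, noDD, desL, startsDown, hba, hb, not_lt.2 ha.le]; ring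
      · simp [wt, noDD, desL, startsDown, hba, hb, not_lt.2 ha.le]; ring
    · by_cases hba : b < a
      · have hcb : ¬ c < b := by
          intro h; simp [noDD, hba, h] at hD
        simp [wt, noDD, desL, startsDown, hba, hb, not_lt.2 ha.le, hcb, hD']
        ring_nf
      · by_cases hcb : c < b
        · simp [wt, noDD, desL, startsDown, hba, hb, not_lt.2 ha.le, hcb, hD']; ring_nf; simp
        · simp [wt, noDD, desL, startsDown, hba, hb, not_lt.2 ha.le, hcb, hD']; ring_nf

lemma noDD_tail {a : ℤ} {l : List ℤ} (h : noDD (a :: l) = true) : noDD l = true := by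
  rcases l with _ | ⟨b, _ | ⟨c, l⟩⟩
  · simp [noDD]
  · simp [noDD]
  · simp only [noDD, Bool.and_eq_true] at h; exact h.2

lemma noDD_cons_of_le {N c : ℤ} {l : List ℤ} (h : N ≤ c) :
    noDD (N :: c :: l) = noDD (c :: l) := by
  rcases l with _ | ⟨d, l⟩ <;> simp [noDD, not_lt.2 h]

/-- Inserting a new minimum behind the head: `k` of the insertions (into a descent) preserve the
number `k` of descents, and the other slots are allowed exactly when they do not follow a
descent. -/
lemma insSum_neg (N : ℤ) (l : List ℤ) : ∀ (a : ℤ) (f : ℕ → ℝ), noDD (a :: l) = true →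
    (∀ c ∈ a :: l, N < c) →
    insSum N (fun z => wt f (a :: z)) l =
      (desL (a :: l) : ℝ) * f (desL (a :: l)) +
      ((l.length : ℝ) - 2 * desL (a :: l) + 1) * f (desL (a :: l) + 1) := by
  induction l with
  | nil =>
    intro a f _ hN
    simp [insSum_nil, wt, noDD, desL, hN a (by simp)]
  | cons b l ih =>
    intro a f hD hN
    have ha := hN a (by simp)
    have hb := hN b (by simp)
    have hD' : noDD (b :: l) = true := noDD_tail hD
    have hD'' : noDD l = true := noDD_tail hD'
    have ihb := fun f => ih b f hD' (fun c hc => hN c (by simp_all))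
    rw [insSum_cons]
    by_cases hba : b < a
    · -- The slot right behind `b` is forbidden, all later ones behave as in `b :: l`.
      rcases l with _ | ⟨c, l⟩
      · simp [insSum_nil, wt, noDD, desL, hba, ha, hb, not_lt.2 hb.le]; norm_num
      · have hcb : ¬ c < b := by
          intro h; simp [noDD, hba, h] at hD
        have hc := hN c (by simp)
        have hrest : insSum N (fun z => wt f (a :: b :: c :: z)) l =
            insSum N (fun z => wt (fun k => f (1 + k)) (b :: c :: z)) l := by
          apply insSum_congr
          intro i hi
          simp [wt, noDD, desL, hba, hcb]
        have h := ihb (fun k => f (1 + k))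
        rw [insSum_cons] at h ⊢
        rw [hrest, eq_sub_of_add_eq' h]
        simp [wt, noDD, desL, hba, ha, hb, hcb, not_lt.2 hb.le, hD', noDD_cons_of_le hc.le, hD'',
          not_lt.2 hc.le]
        ring_nf
    · have hdeep : insSum N (fun z => wt f (a :: b :: z)) l =
          insSum N (fun z => wt f (b :: z)) l := by
        apply insSum_congr
        intro i hi
        obtain ⟨c, m, hcm⟩ := insertIdx_ne_nil l i N hi
        simp [hcm, wt, noDD, desL, hba]
      rw [hdeep, ihb]
      rcases l with _ | ⟨c, l⟩
      · simp [wt, noDD, desL, hba, ha, not_lt.2 hb.le]; ring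
      · simp [wt, noDD, desL, hba, ha, not_lt.2 hb.le, hD']; ring_nf

lemma insSum_sub (N : ℤ) (Φ Ψ : List ℤ → ℝ) (l : List ℤ) :
    insSum N (fun z => Φ z - Ψ z) l = insSum N Φ l - insSum N Ψ l := by
  simp [insSum]

/-- The part of `wt f` carried by the words `z` that do not start with a descent. -/
def wtP (f : ℕ → ℝ) (z : List ℤ) : ℝ := if startsDown z then 0 else wt f z

/-- The part of `wt f` carried by the words `z` that start with a descent. -/
def wtM (f : ℕ → ℝ) (z : List ℤ) : ℝ := if startsDown z then wt f z else 0

lemma insSum_total (N : ℤ) (l : List ℤ) (f : ℕ → ℝ) (hD : noDD (0 :: l) = true)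
    (hN : ∀ c ∈ 0 :: l, c < N ∧ -N < c) :
    insSum N (fun z => wt f (0 :: z)) l + insSum (-N) (fun z => wt f (0 :: z)) l =
      (2 * (desL (0 :: l) : ℝ) + 1) * f (desL (0 :: l)) +
      (2 * (l.length : ℝ) - 4 * desL (0 :: l) + 1 + if startsDown (0 :: l) then 1 else 0) *
        f (desL (0 :: l) + 1) := by
  rw [insSum_pos N l 0 f hD (fun c hc => (hN c hc).1),
    insSum_neg (-N) l 0 f hD (fun c hc => (hN c hc).2)]
  ring

/-- Weight of the words not starting with a descent among the extensions of the word `0l` by `±N`. -/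
lemma insSum_wtP (N : ℤ) (l : List ℤ) (f : ℕ → ℝ) (hD : noDD (0 :: l) = true)
    (hN : ∀ c ∈ 0 :: l, c < N ∧ -N < c) :
    insSum N (fun z => wtP f (0 :: z)) l + insSum (-N) (fun z => wtP f (0 :: z)) l =
      if startsDown (0 :: l) then f (desL (0 :: l)) else
      (2 * (desL (0 :: l) : ℝ) + 1) * f (desL (0 :: l)) +
      (2 * (l.length : ℝ) - 4 * desL (0 :: l)) * f (desL (0 :: l) + 1) := by
  have hN0 : 0 < N := (hN 0 (by simp)).1
  have hT := insSum_total N l f hD hN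
  rcases l with _ | ⟨b, l⟩
  · simp [insSum_nil, wtP, startsDown, wt, noDD, desL, hN0, not_lt.2 hN0.le]
  · obtain ⟨hb, hb'⟩ := hN b (by simp)
    have hD' : noDD (b :: l) = true := noDD_tail hD
    have h1 : noDD (0 :: -N :: b :: l) = true := by
      rw [noDD, noDD_cons_of_le hb'.le]
      simp [not_lt.2 hb'.le, hD']
    rw [insSum_cons, insSum_cons] at hT ⊢
    by_cases h0 : b < 0
    · have h2 : noDD (0 :: N :: b :: l) = true := by
        rcases l with _ | ⟨c, l⟩
        · simp [noDD, not_lt.2 hN0.le]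
        · have hcb : ¬ c < b := by
            intro h; simp [noDD, h0, h] at hD
          simp [noDD, not_lt.2 hN0.le, hcb, hD']
      simp [wtP, wt, startsDown, h0, hN0, not_lt.2 hN0.le, desL, hb, h2, insSum]
    · simp [wtP, startsDown, h0, hN0, not_lt.2 hN0.le] at hT ⊢
      have h3 : wt f (0 :: -N :: b :: l) = f (desL (0 :: b :: l) + 1) := by
        simp [wt, h1, desL, hN0, h0, not_lt.2 hb'.le, add_comm]
      linarith

/-- Weight of the words starting with a descent among the extensions of the word `0l` by `±N`. -/
lemma insSum_wtM (N : ℤ) (l : List ℤ) (f : ℕ → ℝ) (hD : noDD (0 :: l) = true)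
    (hN : ∀ c ∈ 0 :: l, c < N ∧ -N < c) :
    insSum N (fun z => wtM f (0 :: z)) l + insSum (-N) (fun z => wtM f (0 :: z)) l =
      if startsDown (0 :: l) then 2 * (desL (0 :: l) : ℝ) * f (desL (0 :: l)) +
      (2 * (l.length : ℝ) - 4 * desL (0 :: l) + 2) * f (desL (0 :: l) + 1)
      else f (desL (0 :: l) + 1) := by
  have hT := insSum_total N l f hD hN
  have hP := insSum_wtP N l f hD hN
  have h : ∀ z, wtM f z = wt f z - wtP f z := by
    intro z; by_cases hz : startsDown z <;> simp [wtM, wtP, hz]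
  simp only [h, insSum_sub]
  split_ifs at * <;> linarith

/-! ### Signed permutations of rank `n + 1` as insertions -/

lemma ofFn_insertNth {n : ℕ} (i : Fin (n + 1)) (a : ℤ) (f : Fin n → ℤ) :
    List.ofFn (i.insertNth a f : Fin (n + 1) → ℤ) = (List.ofFn f).insertIdx i a := by
  have hi : (i : ℕ) ≤ (List.ofFn f).length := by simpa using Nat.lt_succ_iff.1 i.2
  apply List.ext_getElem
  · rw [List.length_insertIdx_of_le_length hi]; simp
  · intro j h1 h2
    have hj : j < n + 1 := by simpa using h1
    rw [List.getElem_ofFn]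
    obtain ⟨j', rfl⟩ : ∃ j' : Fin (n + 1), (j' : ℕ) = j := ⟨⟨j, hj⟩, rfl⟩
    change (i.insertNth a f : Fin (n + 1) → ℤ) j' = _
    rcases Fin.eq_self_or_eq_succAbove i j' with rfl | ⟨k, rfl⟩
    · simp
    · rw [Fin.insertNth_apply_succAbove, List.getElem_insertIdx]
      rcases lt_or_ge k.castSucc i with h | h
      · have : (k : ℕ) < i := h
        simp [Fin.succAbove_of_castSucc_lt _ _ h, this]
      · have : (i : ℕ) ≤ k := h
        have h3 : ¬ ((k : ℕ) + 1 < i) := by omega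
        have h4 : ¬ ((k : ℕ) + 1 = i) := by omega
        simp [Fin.succAbove_of_le_castSucc _ _ h, h3, h4]

/-- The signed permutation of rank `n + 1` obtained by inserting the entry `n + 1` (or `-(n + 1)`
if `e` is true) right after the first `i` entries of `π`. -/
def insPerm {n : ℕ} (π : SignedPerm n) (i : Fin (n + 1)) (e : Bool) : SignedPerm (n + 1) :=
  (((finSuccEquiv' i).trans (Equiv.optionCongr π.1)).trans (finSuccEquiv' (Fin.last n)).symm,
    i.insertNth e π.2)

/-- The new entry `±(n + 1)`. -/
def newEntry (n : ℕ) (e : Bool) : ℤ := if e then -((n : ℤ) + 1) else (n : ℤ) + 1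

lemma entry_insPerm {n : ℕ} (π : SignedPerm n) (i : Fin (n + 1)) (e : Bool) :
    entry (insPerm π i e) = (i.insertNth (newEntry n e) (entry π) : Fin (n + 1) → ℤ) := by
  funext j
  rcases Fin.eq_self_or_eq_succAbove i j with rfl | ⟨k, rfl⟩
  · cases e <;> simp [entry, insPerm, newEntry]
  · simp [entry, insPerm]

lemma word_insPerm {n : ℕ} (π : SignedPerm n) (i : Fin (n + 1)) (e : Bool) :
    word (insPerm π i e) = 0 :: (List.ofFn (entry π)).insertIdx i (newEntry n e) := by
  rw [word, entry_insPerm, ofFn_insertNth]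

lemma insPerm_bijective (n : ℕ) : Function.Bijective
    (fun q : SignedPerm n × Fin (n + 1) × Bool => insPerm q.1 q.2.1 q.2.2) := by
  rw [Fintype.bijective_iff_injective_and_card]
  constructor
  · rintro ⟨⟨σ, s⟩, i, e⟩ ⟨⟨τ, t⟩, j, d⟩ h
    simp only [insPerm, Prod.mk.injEq] at h
    obtain ⟨h1, h2⟩ := h
    have hij : i = j := by
      have := congrArg (fun ρ : Equiv.Perm (Fin (n + 1)) => ρ.symm (Fin.last n)) h1
      have hnone : ∀ ρ : Equiv.Perm (Fin n), (Equiv.optionCongr ρ).symm none = none :=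
        fun ρ => by rw [Equiv.symm_apply_eq]; rfl
      simpa [hnone] using this
    subst hij
    have hσ : σ = τ := by
      refine Equiv.ext fun k => ?_
      have := congrArg (fun ρ : Equiv.Perm (Fin (n + 1)) => ρ (i.succAbove k)) h1
      simpa using this
    have h3 := Fin.insertNth_injective2 h2
    simp_all
  · simp [Fintype.card_perm, Nat.factorial_succ, pow_succ]
    ring

lemma entry_bound {n : ℕ} (π : SignedPerm n) (c : ℤ) (hc : c ∈ word π) : c.natAbs ≤ n := by
  rcases List.mem_cons.1 hc with rfl | hc
  · simp
  · obtain ⟨j, rfl⟩ := (List.mem_ofFn' _ _).1 hc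
    have := (π.1 j).2
    unfold entry
    split_ifs <;> omega

lemma filter_insertIdx_of_neg (p : ℤ → Bool) (N : ℤ) (hN : p N = false) (l : List ℤ) :
    ∀ i, (l.insertIdx i N).filter p = l.filter p := by
  induction l with
  | nil => intro i; rcases i with _ | i <;> simp [hN]
  | cons b l ih =>
    intro i
    rcases i with _ | i
    · simp [hN]
    · simp [List.filter_cons, ih]

lemma IsSimsun.noDD_word {n : ℕ} {π : SignedPerm n} (h : IsSimsun π) : noDD (word π) = true := by
  have := h n le_rfl
  rwa [List.filter_eq_self.2 (fun c hc => by simpa using entry_bound π c hc)] at this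

lemma isSimsun_insPerm {n : ℕ} (π : SignedPerm n) (i : Fin (n + 1)) (e : Bool) :
    IsSimsun (insPerm π i e) ↔ IsSimsun π ∧ noDD (word (insPerm π i e)) = true := by
  have key : ∀ m ≤ n, (word (insPerm π i e)).filter (fun a => a.natAbs ≤ m) =
      (word π).filter (fun a => a.natAbs ≤ m) := by
    intro m hm
    rw [word_insPerm, word, List.filter_cons, List.filter_cons, filter_insertIdx_of_neg]
    cases e <;> simp [newEntry] <;> omega
  constructor
  · intro h
    refine ⟨fun m hm => ?_, h.noDD_word⟩
    rw [← key m hm]; exact h m (by omega)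
  · rintro ⟨h1, h2⟩ m hm
    rcases Nat.lt_or_ge n m with h | h
    · have : m = n + 1 := by omega
      subst this
      rwa [List.filter_eq_self.2 (fun c hc => by simpa using entry_bound _ c hc)]
    · rw [key m h]; exact h1 m h

lemma wordFn_eq {n : ℕ} (π : SignedPerm n) (i : ℕ) : wordFn π i = (word π).getD i 0 := by
  unfold wordFn word
  rcases i with _ | i
  · simp
  · by_cases h : i < n
    · simp [h, List.getD]
    · simp [h, List.getD]

lemma desL_eq (l : List ℤ) : ∀ a : ℤ, ((range l.length).filter
    (fun i => (a :: l).getD (i + 1) 0 < (a :: l).getD i 0)).card = desL (a :: l) := by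
  induction l with
  | nil => intro a; simp [desL]
  | cons b l ih =>
    intro a
    have := ih b
    rw [card_filter] at this ⊢
    rw [List.length_cons, sum_range_succ', desL, ← this, add_comm]
    simp

lemma desB_eq {n : ℕ} (π : SignedPerm n) : desB π = desL (word π) := by
  have := desL_eq (List.ofFn (entry π)) 0
  simp only [List.length_ofFn] at this
  unfold desB
  simp only [wordFn_eq]
  exact this

lemma entry_ne_zero {n : ℕ} (π : SignedPerm n) (j : Fin n) : entry π j ≠ 0 := by
  unfold entry; split_ifs <;> omega

lemma wordFn_one_neg {n : ℕ} (π : SignedPerm n) : wordFn π 1 < 0 ↔ startsDown (word π) := by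
  rcases n with _ | n
  · simp [wordFn, word, startsDown]
  · simp [wordFn, word, startsDown, List.ofFn_succ]

lemma wordFn_one_pos {n : ℕ} (π : SignedPerm n) :
    (0 < wordFn π 1 ∨ n = 0) ↔ ¬ startsDown (word π) := by
  rcases n with _ | n
  · simp [word, startsDown]
  · have := entry_ne_zero π 0
    simp [wordFn, word, startsDown, List.ofFn_succ]
    omega

lemma sum_RBp (n : ℕ) (f : ℕ → ℝ) :
    ∑ π ∈ RBp n, f (desB π) = ∑ π ∈ RB n, wtP f (word π) := by
  rw [RBp, sum_filter]
  refine sum_congr rfl fun π hπ => ?_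
  have h : IsSimsun π := (mem_filter.1 hπ).2
  by_cases hs : startsDown (word π) <;>
    simp [wordFn_one_pos, hs, wtP, wt, h.noDD_word, desB_eq]

lemma sum_RBm (n : ℕ) (f : ℕ → ℝ) :
    ∑ π ∈ RBm n, f (desB π) = ∑ π ∈ RB n, wtM f (word π) := by
  rw [RBm, sum_filter]
  refine sum_congr rfl fun π hπ => ?_
  have h : IsSimsun π := (mem_filter.1 hπ).2
  by_cases hs : startsDown (word π) <;>
    simp [wordFn_one_neg, hs, wtM, wt, h.noDD_word, desB_eq]

/-- Summation over `RB (n + 1)` by removing the entry of largest absolute value. The weight `Φ` is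
assumed to vanish on words with double descents. -/
lemma sum_RB_succ (n : ℕ) (Φ : List ℤ → ℝ) (hΦ : ∀ z, noDD z ≠ true → Φ z = 0) :
    ∑ π ∈ RB (n + 1), Φ (word π) = ∑ π ∈ RB n,
      (insSum ((n : ℤ) + 1) (fun z => Φ (0 :: z)) (List.ofFn (entry π)) +
       insSum (-((n : ℤ) + 1)) (fun z => Φ (0 :: z)) (List.ofFn (entry π))) := by
  rw [RB, RB, sum_filter, sum_filter,
    ← (insPerm_bijective n).sum_comp (fun π => if IsSimsun π then Φ (word π) else 0),
    Fintype.sum_prod_type]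
  refine sum_congr rfl fun π _ => ?_
  by_cases h : IsSimsun π
  · rw [Fintype.sum_prod_type]
    simp only [isSimsun_insPerm, h, true_and, if_true, Fintype.sum_bool]
    rw [sum_add_distrib, add_comm]
    simp only [insSum, List.length_ofFn, ← Fin.sum_univ_eq_sum_range
      (fun i => Φ (0 :: (List.ofFn (entry π)).insertIdx i _))]
    congr 1 <;> refine sum_congr rfl fun i _ => ?_ <;>
    · rw [word_insPerm]
      split_ifs with h'
      · rfl
      · exact (hΦ _ h').symm
  · simp [isSimsun_insPerm, h]

lemma sum_RBp_succ (n : ℕ) (f : ℕ → ℝ) :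
    ∑ π ∈ RBp (n + 1), f (desB π) =
      ∑ π ∈ RBp n, ((2 * (desB π : ℝ) + 1) * f (desB π) +
        (2 * (n : ℝ) - 4 * desB π) * f (desB π + 1)) + ∑ π ∈ RBm n, f (desB π) := by
  rw [sum_RBp, sum_RB_succ _ _ (fun z hz => by simp [wtP, wt, hz]),
    RBp, RBm, sum_filter, sum_filter, ← sum_add_distrib]
  refine sum_congr rfl fun π hπ => ?_
  have h : IsSimsun π := (mem_filter.1 hπ).2
  rw [insSum_wtP _ _ f h.noDD_word (fun c hc => by have := entry_bound π c hc; omega)]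
  have hw : 0 :: List.ofFn (entry π) = word π := rfl
  rw [hw, desB_eq]
  by_cases hs : startsDown (word π) <;> simp [wordFn_one_neg, wordFn_one_pos, hs]

lemma sum_RBm_succ (n : ℕ) (f : ℕ → ℝ) :
    ∑ π ∈ RBm (n + 1), f (desB π) =
      ∑ π ∈ RBm n, (2 * (desB π : ℝ) * f (desB π) +
        (2 * (n : ℝ) - 4 * desB π + 2) * f (desB π + 1)) + ∑ π ∈ RBp n, f (desB π + 1) := by
  rw [sum_RBm, sum_RB_succ _ _ (fun z hz => by simp [wtM, wt, hz]),
    RBp, RBm, sum_filter, sum_filter, ← sum_add_distrib]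
  refine sum_congr rfl fun π hπ => ?_
  have h : IsSimsun π := (mem_filter.1 hπ).2
  rw [insSum_wtM _ _ f h.noDD_word (fun c hc => by have := entry_bound π c hc; omega)]
  have hw : 0 :: List.ofFn (entry π) = word π := rfl
  rw [hw, desB_eq]
  by_cases hs : startsDown (word π) <;> simp [wordFn_one_neg, wordFn_one_pos, hs]

/-! ### Recurrences for the descent polynomials -/

/-- Derivative of `R⁺_n`. -/
noncomputable def RpD (n : ℕ) (x : ℝ) : ℝ := ∑ π ∈ RBp n, (desB π : ℝ) * x ^ (desB π - 1)

/-- Derivative of `R⁻_n`. -/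
noncomputable def RmD (n : ℕ) (x : ℝ) : ℝ := ∑ π ∈ RBm n, (desB π : ℝ) * x ^ (desB π - 1)

lemma hasDerivAt_RpReal (n : ℕ) (x : ℝ) : HasDerivAt (RpReal n) (RpD n x) x := by
  unfold RpReal RpD
  exact HasDerivAt.fun_sum fun π _ => hasDerivAt_pow _ _

lemma hasDerivAt_RmReal (n : ℕ) (x : ℝ) : HasDerivAt (RmReal n) (RmD n x) x := by
  unfold RmReal RmD
  exact HasDerivAt.fun_sum fun π _ => hasDerivAt_pow _ _

lemma RpReal_succ (n : ℕ) (x : ℝ) : RpReal (n + 1) x =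
    (1 + 2 * n * x) * RpReal n x + (2 * x - 4 * x ^ 2) * RpD n x + RmReal n x := by
  have h := sum_RBp_succ n (fun k => x ^ k)
  unfold RpReal RmReal RpD
  rw [h, mul_sum, mul_sum, ← sum_add_distrib]
  congr 1
  refine sum_congr rfl fun π _ => ?_
  rcases desB π with _ | k
  · simp
  · simp; ring

lemma RmReal_succ (n : ℕ) (x : ℝ) : RmReal (n + 1) x =
    (2 * x + 2 * n * x) * RmReal n x + (2 * x - 4 * x ^ 2) * RmD n x + x * RpReal n x := by
  have h := sum_RBm_succ n (fun k => x ^ k)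
  unfold RpReal RmReal RmD
  rw [h, mul_sum, mul_sum, mul_sum, ← sum_add_distrib]
  congr 1
  · refine sum_congr rfl fun π _ => ?_
    rcases desB π with _ | k
    · simp; ring
    · simp; ring
  · exact sum_congr rfl fun π _ => pow_succ' _ _

lemma RpReal_zero (x : ℝ) : RpReal 0 x = 1 := by
  have : RBp 0 = {(1, Fin.elim0)} := by decide
  simp [RpReal, this, desB]

lemma RmReal_zero (x : ℝ) : RmReal 0 x = 0 := by
  have : RBm 0 = ∅ := by decide
  simp [RmReal, this]

/-! ### Derivatives of the closed form -/

/-- `(-1/(√2 sin y)) (-sin y/(1+cos y))^r`, the common form of `F₁` (`r = -1/√2`) and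
`F₂` (`r = 1/√2`). -/
noncomputable def Fr (r y : ℝ) : ℝ :=
  (-1 / (Real.sqrt 2 * Real.sin y)) * ((-Real.sin y / (1 + Real.cos y)) ^ r)

lemma hasDerivAt_Fr {y : ℝ} (hs : Real.sin y < 0) (hc : 0 < Real.cos y) (r : ℝ) :
    HasDerivAt (Fr r) (Fr r y * ((r - Real.cos y) / Real.sin y)) y := by
  have h2 : (0 : ℝ) < Real.sqrt 2 := by positivity
  have h1c : 0 < 1 + Real.cos y := by linarith
  have hT : 0 < -Real.sin y / (1 + Real.cos y) := div_pos (by linarith) h1c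
  have hT' : HasDerivAt (fun y => -Real.sin y / (1 + Real.cos y))
      ((-Real.sin y / (1 + Real.cos y)) / Real.sin y) y := by
    have := ((Real.hasDerivAt_sin y).fun_neg).fun_div ((Real.hasDerivAt_cos y).const_add 1) h1c.ne'
    convert! this using 1
    field_simp [hs.ne]
    linear_combination Real.sin_sq_add_cos_sq y
  have hA : HasDerivAt (fun y => -1 / (Real.sqrt 2 * Real.sin y))
      (-1 / (Real.sqrt 2 * Real.sin y) * (-Real.cos y / Real.sin y)) y := by
    have := (hasDerivAt_const y (-1 : ℝ)).fun_div ((Real.hasDerivAt_sin y).const_mul (Real.sqrt 2))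
      (mul_ne_zero h2.ne' hs.ne)
    convert! this using 1
    field_simp [hs.ne]
    ring
  have hP := hT'.rpow_const (p := r) (Or.inl hT.ne')
  convert! hA.fun_mul hP using 1
  rw [Real.rpow_sub_one hT.ne', Fr]
  field_simp [hs.ne, hT.ne']
  ring

lemma analyticAt_Fr {y : ℝ} (hs : Real.sin y < 0) (hc : 0 < Real.cos y) (r : ℝ) :
    AnalyticAt ℝ (Fr r) y := by
  have h2 : (0 : ℝ) < Real.sqrt 2 := by positivity
  have h1c : 0 < 1 + Real.cos y := by linarith
  have hT : 0 < -Real.sin y / (1 + Real.cos y) := div_pos (by linarith) h1c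
  have hsin : AnalyticAt ℝ Real.sin y := Real.analyticAt_sin
  have hcos : AnalyticAt ℝ Real.cos y := Real.analyticAt_cos
  have hTa : AnalyticAt ℝ (fun y => -Real.sin y / (1 + Real.cos y)) y :=
    hsin.fun_neg.fun_div (analyticAt_const.fun_add hcos) h1c.ne'
  have hA : AnalyticAt ℝ (fun y => -1 / (Real.sqrt 2 * Real.sin y)) y :=
    analyticAt_const.fun_div (analyticAt_const.fun_mul hsin) (mul_ne_zero h2.ne' hs.ne)
  have hE : AnalyticAt ℝ
      (fun y => Real.exp (Real.log (-Real.sin y / (1 + Real.cos y)) * r)) y :=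
    ((hTa.log hT).fun_mul analyticAt_const).rexp
  refine (hA.fun_mul hE).congr ?_
  filter_upwards [hTa.continuousAt.eventually_const_lt hT] with z hz
  rw [Fr, Real.rpow_def_of_pos hz]

/-- The function `q^n (R⁺_n(X) S + R⁻_n(X) √2 cos y D)` with `q = -cot y`, `X = 1/(2 cos² y)`,
`S = F₁ + K F₂` and `D = F₁ - K F₂`; by `hasDerivAt_Hn` it is the `n`-th derivative of `S`
where `sin y < 0 < cos y`. -/
noncomputable def Hn (K : ℝ) (n : ℕ) (y : ℝ) : ℝ :=
  (-Real.cos y / Real.sin y) ^ n *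
    (RpReal n (1 / (2 * Real.cos y ^ 2)) * (Ffun₁ y + K * Ffun₂ y) +
     RmReal n (1 / (2 * Real.cos y ^ 2)) * (Real.sqrt 2 * Real.cos y) *
      (Ffun₁ y - K * Ffun₂ y))

lemma hasDerivAt_Hn (K : ℝ) (n : ℕ) {y : ℝ} (hs : Real.sin y < 0) (hc : 0 < Real.cos y) :
    HasDerivAt (Hn K n) (Hn K (n + 1) y) y := by
  have h1 : HasDerivAt Ffun₁ _ y := hasDerivAt_Fr hs hc (-(1 / Real.sqrt 2))
  have h2 : HasDerivAt Ffun₂ _ y := hasDerivAt_Fr hs hc (1 / Real.sqrt 2)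
  change HasDerivAt Ffun₁ (Ffun₁ y * _) y at h1
  change HasDerivAt Ffun₂ (Ffun₂ y * _) y at h2
  have hα : 1 / Real.sqrt 2 = Real.sqrt 2 / 2 := by
    rw [div_eq_div_iff (by positivity) (by norm_num)]; norm_num
  rw [hα] at h1 h2
  have hcs := Real.sin_sq_add_cos_sq y
  have hq : HasDerivAt (fun y => -Real.cos y / Real.sin y) (1 / Real.sin y ^ 2) y := by
    have := ((Real.hasDerivAt_cos y).fun_neg).fun_div (Real.hasDerivAt_sin y) hs.ne
    convert! this using 1
    field_simp [hs.ne]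
    linear_combination -hcs
  have hqn : HasDerivAt (fun y => (-Real.cos y / Real.sin y) ^ n)
      (-n / (Real.sin y * Real.cos y) * (-Real.cos y / Real.sin y) ^ n) y := by
    convert! hq.fun_pow n using 1
    rcases n with _ | n
    · simp
    · rw [pow_succ, Nat.add_sub_cancel]
      field_simp [hs.ne, hc.ne']
  have hX : HasDerivAt (fun y => 1 / (2 * Real.cos y ^ 2)) (Real.sin y / Real.cos y ^ 3) y := by
    have := (hasDerivAt_const y (1 : ℝ)).fun_div
      (((Real.hasDerivAt_cos y).fun_pow 2).const_mul 2) (by positivity)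
    convert! this using 1
    field_simp [hc.ne']
    ring
  have hP := (hasDerivAt_RpReal n _).comp y hX
  have hM := (hasDerivAt_RmReal n _).comp y hX
  have hS := h1.fun_add (h2.const_mul K)
  have hD := h1.fun_sub (h2.const_mul K)
  have hall := hqn.fun_mul ((hP.fun_mul hS).fun_add
    ((hM.fun_mul ((Real.hasDerivAt_cos y).const_mul (Real.sqrt 2))).fun_mul hD))
  convert! hall using 1
  simp only [Function.comp_apply]
  rw [Hn, RpReal_succ, RmReal_succ, pow_succ]
  set X := 1 / (2 * Real.cos y ^ 2) with hXdef
  generalize RpReal n X = P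
  generalize RmReal n X = M
  generalize RpD n X = P'
  generalize RmD n X = M'
  generalize Ffun₁ y = A
  generalize Ffun₂ y = B
  generalize (-Real.cos y / Real.sin y) ^ n = Q
  -- The identities below match the coefficients of the two recurrences in front of S and D.
  have e1 : -Real.cos y / Real.sin y * (2 * n * X) = -n / (Real.sin y * Real.cos y) := by
    rw [hXdef]; field_simp [hs.ne, hc.ne']
  have e2 : -Real.cos y / Real.sin y * (2 * X - 4 * X ^ 2) = Real.sin y / Real.cos y ^ 3 := by
    rw [hXdef]; field_simp [hs.ne, hc.ne']
    linear_combination -4 * hcs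
  have e3 : -Real.cos y / Real.sin y * X * (Real.sqrt 2 * Real.cos y) =
      -(Real.sqrt 2 / 2) / Real.sin y := by
    rw [hXdef]; field_simp [hs.ne, hc.ne']
  have e4 : -Real.cos y / Real.sin y * (2 * X) * (Real.sqrt 2 * Real.cos y) =
      Real.sqrt 2 * -Real.sin y +
        Real.sqrt 2 * Real.cos y * (-Real.cos y / Real.sin y) := by
    rw [hXdef]; field_simp [hs.ne, hc.ne']
    linear_combination hcs
  have e5 : Real.sqrt 2 * Real.cos y * (-(Real.sqrt 2 / 2) / Real.sin y) =
      -Real.cos y / Real.sin y := by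
    field_simp [hs.ne]
    norm_num
  have e6 : (-(Real.sqrt 2 / 2) - Real.cos y) / Real.sin y =
    -(Real.sqrt 2 / 2) / Real.sin y + -Real.cos y / Real.sin y := by ring
  have e7 : (Real.sqrt 2 / 2 - Real.cos y) / Real.sin y =
    -(-(Real.sqrt 2 / 2) / Real.sin y) + -Real.cos y / Real.sin y := by ring
  rw [e6, e7]
  linear_combination Q * (P * (A + K * B) + M * (Real.sqrt 2 * Real.cos y) * (A - K * B)) * e1 +
    Q * (P' * (A + K * B) + M' * (Real.sqrt 2 * Real.cos y) * (A - K * B)) * e2 +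
    Q * P * (A - K * B) * e3 + Q * M * (A - K * B) * e4 - Q * M * (A + K * B) * e5

lemma iteratedDeriv_Hn (x K C t : ℝ) (n : ℕ) :
    Real.sin (ufun x t) < 0 → 0 < Real.cos (ufun x t) →
    iteratedDeriv n (fun t => C * Hn K 0 (ufun x t)) t =
      C * (Real.sqrt (2 * x - 1) ^ n * Hn K n (ufun x t)) := by
  have hu : ∀ t, HasDerivAt (ufun x) (Real.sqrt (2 * x - 1)) t := fun t => by
    have := ((hasDerivAt_id t).mul_const (Real.sqrt (2 * x - 1))).sub_const
      (Real.arctan (Real.sqrt (2 * x - 1)))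
    rw [one_mul] at this
    exact this
  induction n generalizing t with
  | zero => intros; simp
  | succ n ih =>
    intro hs hc
    have hsc : ContinuousAt (fun t => Real.sin (ufun x t)) t :=
      Real.continuous_sin.continuousAt.comp (hu t).continuousAt
    have hcc : ContinuousAt (fun t => Real.cos (ufun x t)) t :=
      Real.continuous_cos.continuousAt.comp (hu t).continuousAt
    have hev : iteratedDeriv n (fun t => C * Hn K 0 (ufun x t)) =ᶠ[nhds t]
        fun t => C * (Real.sqrt (2 * x - 1) ^ n * Hn K n (ufun x t)) := by
      filter_upwards [hsc.eventually_lt_const hs, hcc.eventually_const_lt hc] with z h1 h2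
      exact ih z h1 h2
    rw [iteratedDeriv_succ, hev.deriv_eq]
    have := (((hasDerivAt_Hn K n hs hc).comp t (hu t)).const_mul
      (Real.sqrt (2 * x - 1) ^ n)).const_mul C
    refine this.deriv.trans ?_
    rw [pow_succ]; ring

/-- The exponential generating function of the `R⁺_n(x)`:
`Σ R⁺_n(x) tⁿ/n! = (√(2x−1)/(2√x p))·(p²F₂(u(t)) + F₁(u(t)))` for `t` near `0`. -/
theorem stmt5 (x : ℝ) (hx : 1 / 2 < x) :
    ∃ ε > 0, ∀ t : ℝ, |t| < ε →
      HasSum (fun n : ℕ => RpReal n x * t ^ n / (Nat.factorial n : ℝ))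
        (Real.sqrt (2 * x - 1) / (2 * Real.sqrt x * pfun x) *
          ((pfun x) ^ 2 * Ffun₂ (ufun x t) + Ffun₁ (ufun x t))) := by
  have h21 : 0 < 2 * x - 1 := by linarith
  have hx0 : 0 < x := by linarith
  set s := Real.sqrt (2 * x - 1) with hsdef
  have hs0 : 0 < s := Real.sqrt_pos.2 h21
  have hs2 : s ^ 2 = 2 * x - 1 := Real.sq_sqrt h21.le
  set w := Real.sqrt (2 * x) with hwdef
  have hw2 : w ^ 2 = 2 * x := Real.sq_sqrt (by linarith)
  have hw1 : 1 < w := by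
    rw [hwdef]; exact Real.lt_sqrt_of_sq_lt (by linarith)
  have hu0 : ufun x 0 = -Real.arctan s := by simp [ufun, hsdef]
  have h1s : 1 + s ^ 2 = 2 * x := by linarith
  have hsin : Real.sin (ufun x 0) = -(s / w) := by
    rw [hu0, Real.sin_neg, Real.sin_arctan, h1s]
  have hcos : Real.cos (ufun x 0) = 1 / w := by
    rw [hu0, Real.cos_neg, Real.cos_arctan, h1s]
  have hsn : Real.sin (ufun x 0) < 0 := by rw [hsin]; simp; positivity
  have hcp : 0 < Real.cos (ufun x 0) := by rw [hcos]; positivity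
  -- The base `T = tan (θ/2)` of the powers in `F₁`, `F₂` at `t = 0` satisfies `p = T^(-1/√2)`.
  have hTeq : -Real.sin (ufun x 0) / (1 + Real.cos (ufun x 0)) = s / (w + 1) := by
    rw [hsin, hcos]; field_simp
  have hT : 0 < s / (w + 1) := by positivity
  have hα : 1 / Real.sqrt 2 = Real.sqrt 2 / 2 := by
    rw [div_eq_div_iff (by positivity) (by norm_num)]; norm_num
  have hp : pfun x = (s / (w + 1)) ^ (-(1 / Real.sqrt 2)) := by
    have h1 : (w + 1) / (w - 1) = (s / (w + 1)) ^ (-2 : ℝ) := by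
      rw [Real.rpow_neg hT.le, Real.rpow_two, div_pow, hs2, inv_div, ← hw2,
        div_eq_div_iff (by linarith) (by nlinarith)]
      ring
    rw [pfun, ← hwdef, h1, ← Real.rpow_mul hT.le, hα]
    congr 1; ring
  have hp0 : 0 < pfun x := by rw [hp]; positivity
  have hF1 : Ffun₁ (ufun x 0) = w / (Real.sqrt 2 * s) * pfun x := by
    rw [Ffun₁, hTeq, ← hp, hsin]; field_simp
  have hF2 : Ffun₂ (ufun x 0) = w / (Real.sqrt 2 * s) * (pfun x)⁻¹ := by
    rw [Ffun₂, hTeq, hp, Real.rpow_neg hT.le, inv_inv, hsin]; field_simp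
  set C := s / (2 * Real.sqrt x * pfun x) with hC
  have hg : ∀ t, C * Hn (pfun x ^ 2) 0 (ufun x t) =
      C * ((pfun x) ^ 2 * Ffun₂ (ufun x t) + Ffun₁ (ufun x t)) := fun t => by
    simp [Hn, RpReal_zero, RmReal_zero, add_comm]
  have han : AnalyticAt ℝ (fun t => C * Hn (pfun x ^ 2) 0 (ufun x t)) 0 := by
    simp only [hg]
    have hua : AnalyticAt ℝ (ufun x) 0 :=
      (analyticAt_id.fun_mul analyticAt_const).fun_sub analyticAt_const
    have h1 : AnalyticAt ℝ (fun t => Ffun₁ (ufun x t)) 0 :=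
      AnalyticAt.fun_comp (analyticAt_Fr hsn hcp (-(1 / Real.sqrt 2))) hua
    have h2 : AnalyticAt ℝ (fun t => Ffun₂ (ufun x t)) 0 :=
      AnalyticAt.fun_comp (analyticAt_Fr hsn hcp (1 / Real.sqrt 2)) hua
    exact analyticAt_const.fun_mul ((analyticAt_const.fun_mul h2).fun_add h1)
  have hcoef : ∀ n, iteratedDeriv n (fun t => C * Hn (pfun x ^ 2) 0 (ufun x t)) 0 =
      RpReal n x := by
    intro n
    have hX : 1 / (2 * Real.cos (ufun x 0) ^ 2) = x := by
      rw [hcos, div_pow, hw2]; field_simp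
    have hq : -Real.cos (ufun x 0) / Real.sin (ufun x 0) = s⁻¹ := by
      rw [hcos, hsin]; field_simp
    have hw : w = Real.sqrt 2 * Real.sqrt x := by
      rw [hwdef, Real.sqrt_mul (by norm_num)]
    have hsx : 0 < Real.sqrt x := Real.sqrt_pos.2 hx0
    rw [iteratedDeriv_Hn _ _ _ _ _ hsn hcp, ← hsdef, Hn, hX, hq, hF1, hF2, inv_pow, hC, hw]
    field_simp
    ring
  obtain ⟨ε, hε0, hε⟩ :=
    Metric.eventually_nhds_iff.1 han.hasFPowerSeriesAt.eventually_hasSum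
  refine ⟨ε, hε0, fun t ht => ?_⟩
  have h := hε (y := t) (by simpa using ht)
  rw [zero_add, hg] at h
  convert! h using 2 with n
  rw [FormalMultilinearSeries.ofScalars_apply_eq, hcoef, smul_eq_mul]
  ring
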